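/- Let C = {f ∈ F : φ(f) = f} be algebraically closed of characteristic 0. If M is an irreducible finite-dimensional D-module whose restriction to D_t is reducible for some t ≥ 1, then the restriction of M to D_p is reducible for some prime p dividing gcd(t, dim_F M). -/

import Mathlib

/-- The fixed field `C = {f ∈ F : φ(f) = f}` of a field automorphism `φ`. -/
def fixedSubfield {F : Type*} [Field F] (φ : F ≃+* F) : Subfield F where
  carrier := {f | φ f = f}
  mul_mem' := by intro a b ha hb; simp only [Set.mem_setOf_eq] at *; rw [map_mul, ha, hb]
  one_mem' := by simp [Set.mem_setOf_eq]
  add_mem' := by intro a b ha hb; simp only [Set.mem_setOf_eq] at *; rw [map_add, ha, hb]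
  zero_mem' := by simp [Set.mem_setOf_eq]
  neg_mem' := by intro a ha; simp only [Set.mem_setOf_eq] at *; rw [map_neg, ha]
  inv_mem' := by intro a ha; simp only [Set.mem_setOf_eq] at *; rw [map_inv₀, ha]

/-- A subspace `p` is stable under the (semilinear) action `g`. -/
def DiffStab {F V : Type*} [Field F] [AddCommGroup V] [Module F V]
    (g : V → V) (p : Submodule F V) : Prop :=
  ∀ x ∈ p, g x ∈ p

/-!
By Clifford's argument `M` is semisimple over `D_t`, so the projection onto a proper submodule is a
non-scalar `e₀ ∈ End_F M` commuting with `A ^ t`. Conjugation by `A` is a `C`-algebra automorphism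
`σ` of `End_F M` whose fixed points are scalars, by Schur's lemma. As `σ ^ t` fixes `e₀` and
`X ^ t - 1` splits over `C`, some nonzero `e` satisfies `σ e = z e` with `z ≠ 1`, `z ^ t = 1`
(the Kummer case), or `σ e = e + 1` and the characteristic divides `t` (the Artin–Schreier case).
After replacing `e` by a power, `z` has prime order `p`, and then `e ^ p` (respectively `e ^ p - e`,
with `p` the characteristic) is fixed by `σ`, hence a constant. Thus `e` is annihilated by a
polynomial over `C` with `p` distinct roots, and `A` permutes its `p` eigenspaces cyclically, so
that they all have the same dimension and are stable under `A ^ p`.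
-/

section

open Module Polynomial

theorem exists_aeval_notMem_of_aeval_prod_mem {K M : Type*} [Field K] [AddCommGroup M] [Module K M]
    (L : End K M) (N : Submodule K M) {x : M} (hx : x ∉ N) (s : Multiset K)
    (hs : aeval L (s.map (X - C ·)).prod x ∈ N) :
    ∃ z ∈ s, ∃ Q : K[X], aeval L Q x ∉ N ∧ aeval L ((X - C z) * Q) x ∈ N := by
  induction s using Multiset.induction with
  | empty => exact absurd (by simpa using hs) hx
  | cons z s ih =>
    rw [Multiset.map_cons, Multiset.prod_cons] at hs
    by_cases h : aeval L (s.map (X - C ·)).prod x ∈ N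
    · obtain ⟨w, hw, Q, hQ⟩ := ih h
      exact ⟨w, Multiset.mem_cons_of_mem hw, Q, hQ⟩
    · exact ⟨z, Multiset.mem_cons_self z s, _, h, hs⟩

section

variable {K B : Type*} [Field K] [Ring B] [Algebra K B]

theorem exists_map_sub_smul_mem_bot [IsAlgClosed K] (σ : B →ₐ[K] B) {t : ℕ} (ht : t ≠ 0)
    {x : B} (hx : x ∉ (⊥ : Subalgebra K B)) (hσx : σ^[t] x = x) :
    ∃ z : K, z ^ t = 1 ∧ ∃ r ∉ (⊥ : Subalgebra K B), σ^[t] r = r ∧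
      σ r - z • r ∈ (⊥ : Subalgebra K B) := by
  set L : End K B := σ.toLinearMap
  have hLt (b : B) : (L ^ t) b = σ^[t] b := by rw [End.pow_apply]; rfl
  have hmonic : (X ^ t - 1 : K[X]).Monic := by simpa using monic_X_pow_sub_C (1 : K) ht
  have hprod := (IsAlgClosed.splits (X ^ t - 1 : K[X])).eq_prod_roots_of_monic hmonic
  obtain ⟨z, hz, Q, hQ, hzQ⟩ := exists_aeval_notMem_of_aeval_prod_mem L
    (⊥ : Subalgebra K B).toSubmodule hx _ (by
      rw [← hprod]
      simp [hLt, hσx])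
  refine ⟨z, ?_, aeval L Q x, hQ, ?_, ?_⟩
  · simpa [sub_eq_zero] using (mem_roots'.1 hz).2
  · have hcomm : Commute (L ^ t) (aeval L Q) := by
      simpa using (Commute.all (X ^ t) Q).map (aeval L)
    rw [← hLt, ← End.mul_apply, hcomm.eq, End.mul_apply, hLt, hσx]
  · simpa [L] using hzQ

theorem exists_map_eq_smul_or_add_one [IsAlgClosed K] (σ : B →ₐ[K] B)
    (hfix : ∀ b, σ b = b → b ∈ (⊥ : Subalgebra K B)) {t : ℕ} (ht : t ≠ 0)
    {x : B} (hx : x ∉ (⊥ : Subalgebra K B)) (hσx : σ^[t] x = x) :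
    (∃ z : K, z ≠ 1 ∧ z ^ t = 1 ∧ ∃ e ≠ 0, σ e = z • e) ∨
      (t : K) = 0 ∧ ∃ e, σ e = e + 1 := by
  have : Nontrivial B := nontrivial_of_ne x 0 fun h => hx (h ▸ zero_mem _)
  obtain ⟨z, hzt, r, hr, hσr, hc⟩ := exists_map_sub_smul_mem_bot σ ht hx hσx
  obtain ⟨c, hc⟩ := Algebra.mem_bot.1 hc
  rw [eq_comm, sub_eq_iff_eq_add'] at hc
  rcases eq_or_ne z 1 with rfl | hz
  · rw [one_smul] at hc
    have hc0 : c ≠ 0 := by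
      rintro rfl
      exact hr (hfix r (by simpa using hc))
    refine .inr ⟨?_, c⁻¹ • r, ?_⟩
    · have hiter (n : ℕ) : σ^[n] r = r + algebraMap K B (n * c) := by
        induction n with
        | zero => simp
        | succ n ih =>
          rw [Function.iterate_succ_apply', ih, map_add, hc, AlgHom.commutes, add_assoc, ← map_add]
          congr 2
          push_cast
          ring
      have := hiter t
      rw [hσr, left_eq_add, map_eq_zero_iff _ (algebraMap K B).injective] at this
      exact (mul_eq_zero.1 this).resolve_right hc0
    · rw [map_smul, hc, smul_add, Algebra.algebraMap_eq_smul_one, smul_smul, inv_mul_cancel₀ hc0,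
        one_smul]
  · refine .inl ⟨z, hz, hzt, r + algebraMap K B (c / (z - 1)), fun h => hr ?_, ?_⟩
    · rw [eq_neg_of_add_eq_zero_left h]
      exact neg_mem (Subalgebra.algebraMap_mem _ _)
    · have : c + c / (z - 1) = z * (c / (z - 1)) := by
        field_simp [sub_ne_zero.2 hz]
        ring
      rw [map_add, hc, AlgHom.commutes, add_assoc, ← map_add, this, smul_add,
        Algebra.smul_def z (algebraMap K B _), ← map_mul]

end

theorem iSup_ker_aeval_eq_ker_aeval_prod {K M ι : Type*} [Field K] [AddCommGroup M] [Module K M]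
    (u : End K M) (f : ι → K[X]) (s : Finset ι)
    (hf : (s : Set ι).Pairwise (Function.onFun IsCoprime f)) :
    ⨆ i ∈ s, LinearMap.ker (aeval u (f i)) = LinearMap.ker (aeval u (∏ i ∈ s, f i)) := by
  classical
  induction s using Finset.induction with
  | empty => simp [End.one_eq_id]
  | insert i s hi ih =>
    have hcop : IsCoprime (f i) (∏ j ∈ s, f j) := IsCoprime.prod_right fun j hj =>
      hf (by simp) (by simp [hj]) (ne_of_mem_of_not_mem hj hi).symm
    rw [Finset.iSup_insert, Finset.prod_insert hi, ih (hf.mono (by simp))]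
    exact sup_ker_aeval_eq_ker_aeval_mul_of_coprime u hcop

theorem isInternal_eigenspace_of_aeval_eq_zero {K M ι : Type*} [Field K] [AddCommGroup M]
    [Module K M] [Fintype ι] [DecidableEq ι] (u : End K M) {μ : ι → K} (hμ : Function.Injective μ)
    {P : K[X]} (hP : P.Monic) (hdeg : P.natDegree = Fintype.card ι) (hroot : ∀ i, P.IsRoot (μ i))
    (hu : aeval u P = 0) : DirectSum.IsInternal fun i => End.eigenspace u (μ i) := by
  have hcop : Pairwise (Function.onFun IsCoprime fun i => X - C (μ i)) :=
    pairwise_coprime_X_sub_C hμ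
  have hdvd : ∏ i, (X - C (μ i)) ∣ P :=
    Finset.prod_dvd_of_coprime (hcop.set_pairwise _) fun i _ => dvd_iff_isRoot.2 (hroot i)
  have hprod : P = ∏ i, (X - C (μ i)) :=
    eq_of_monic_of_dvd_of_natDegree_le (monic_prod_X_sub_C μ _) hP hdvd (by simp [hdeg])
  have hsup := iSup_ker_aeval_eq_ker_aeval_prod u (fun i => X - C (μ i)) Finset.univ
    (hcop.set_pairwise _)
  rw [← hprod, hu, LinearMap.ker_zero] at hsup
  refine DirectSum.isInternal_submodule_of_iSupIndep_of_iSup_eq_top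
    ((End.eigenspaces_iSupIndep u).comp hμ) ?_
  simpa [End.eigenspace_def, Algebra.algebraMap_eq_smul_one] using hsup

theorem minpoly_map_eq_self {F B : Type*} [Field F] [Ring B] [Algebra F B] (φ : F →+* F)
    (σ : B →+* B) (hσ : σ.comp (algebraMap F B) = (algebraMap F B).comp φ) {b : B}
    (hb : IsIntegral F b) (hσb : σ b = b) : (minpoly F b).map φ = minpoly F b := by
  have hmonic := minpoly.monic hb
  refine eq_of_monic_of_dvd_of_natDegree_le hmonic (hmonic.map φ) (minpoly.dvd F b ?_)
    (by rw [natDegree_map])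
  have := map_aeval_eq_aeval_map hσ.symm (minpoly F b) b
  rw [minpoly.aeval, map_zero, hσb] at this
  exact this.symm

theorem complementedLattice_of_map_eq_self {α : Type*} [CompleteLattice α] [IsModularLattice α]
    [IsCompactlyGenerated α] [IsAtomic α] (g : α ≃o α) (hg : ∀ a, g a = a → a = ⊥ ∨ a = ⊤) :
    ComplementedLattice α := by
  have hfix : g (sSup {a | IsAtom a}) = sSup {a | IsAtom a} := by
    rw [g.map_sSup, ← sSup_image]
    congr 1
    ext b
    exact ⟨by rintro ⟨a, ha, rfl⟩; exact (g.isAtom_iff a).2 ha,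
      fun hb => ⟨g.symm b, (g.symm.isAtom_iff b).2 hb, g.apply_symm_apply b⟩⟩
  refine complementedLattice_of_sSup_atoms_eq_top ((hg _ hfix).elim (fun hbot => ?_) id)
  refine hbot.trans ((eq_bot_or_exists_atom_le ⊤).resolve_right ?_).symm
  rintro ⟨a, ha, -⟩
  exact ha.1 (le_bot_iff.1 (hbot ▸ le_sSup ha))

section DifferenceModule

variable {F V : Type*} [Field F] [AddCommGroup V] [Module F V]

/-- The lattice of subspaces stable under an additive map `B`. For `B = A ^ n` these are the
submodules of the restriction of `(V, A)` to `D_n`. -/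
def stableSublattice (F : Type*) {V : Type*} [Field F] [AddCommGroup V] [Module F V] (B : V →+ V) :
    CompleteSublattice (Submodule F V) :=
  .mk' {p | DiffStab B p}
    (fun S hS => by
      suffices (sSup S).toAddSubmonoid ≤ (sSup S).toAddSubmonoid.comap B from fun x hx => this hx
      conv_lhs => rw [Submodule.toAddSubmonoid_sSup]
      refine sSup_le ?_
      rintro _ ⟨p, hp, rfl⟩ x hx
      exact le_sSup hp (hS hp x hx))
    (fun S hS x hx => Submodule.mem_sInf.2 fun p hp => hS hp x (Submodule.mem_sInf.1 hx p hp))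

instance (B : V →+ V) : IsModularLattice (stableSublattice F B) :=
  ⟨fun {p} q _ h => IsModularLattice.sup_inf_le_assoc_of_le (x := (p : Submodule F V)) q h⟩

instance (B : V →+ V) [IsArtinian F V] : WellFoundedLT (stableSublattice F B) :=
  inferInstanceAs (WellFoundedLT {x : Submodule F V // x ∈ stableSublattice F B})

instance (B : V →+ V) [IsNoetherian F V] : WellFoundedGT (stableSublattice F B) :=
  inferInstanceAs (WellFoundedGT {x : Submodule F V // x ∈ stableSublattice F B})

attribute [local instance] RingHomInvPair.of_ringEquiv RingHomInvPair.of_ringEquiv_symm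

theorem diffStab_map_iff {φ : F ≃+* F} (A : V ≃ₛₗ[(φ : F →+* F)] V) {B : V → V}
    (hAB : ∀ v, A (B v) = B (A v)) {p : Submodule F V} :
    DiffStab B (p.map (A : V →ₛₗ[(φ : F →+* F)] V)) ↔ DiffStab B p :=
  Set.forall_mem_image.trans <| forall₂_congr fun x _ => by
    rw [LinearEquiv.coe_coe, ← hAB]
    exact A.injective.mem_set_image (s := p)

theorem exists_isCompl_diffStab [FiniteDimensional F V] {φ : F ≃+* F}
    (A : V ≃ₛₗ[(φ : F →+* F)] V) (hirr : ∀ p : Submodule F V, DiffStab A p → p = ⊥ ∨ p = ⊤)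
    (B : V →+ V) (hAB : ∀ v, A (B v) = B (A v)) {p : Submodule F V} (hp : DiffStab B p) :
    ∃ q, DiffStab B q ∧ IsCompl p q := by
  let g : stableSublattice F B ≃o stableSublattice F B :=
    { (Submodule.orderIsoMapComap A).toEquiv.subtypeEquiv
        fun p => (diffStab_map_iff A hAB (p := p)).symm with
      map_rel_iff' := (Submodule.orderIsoMapComap A).le_iff_le }
  have hg : ∀ q, g q = q → q = ⊥ ∨ q = ⊤ := by
    intro q hq
    have := hirr q fun x hx => by
      rw [← congrArg Subtype.val hq]
      exact Submodule.mem_map_of_mem hx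
    exact this.imp (fun h => Subtype.ext h) (fun h => Subtype.ext h)
  have : IsCompactlyGenerated (stableSublattice F B) :=
    CompleteLattice.isCompactlyGenerated_of_wellFoundedGT
  have := complementedLattice_of_map_eq_self g hg
  obtain ⟨q, hq⟩ := exists_isCompl (⟨p, hp⟩ : stableSublattice F B)
  exact ⟨q, q.2, CompleteSublattice.isCompl_iff.1 hq⟩

theorem projection_comm_of_diffStab {B : V →+ V} {p q : Submodule F V} (h : IsCompl p q)
    (hp : DiffStab B p) (hq : DiffStab B q) (v : V) :
    p.projection q h (B v) = B (p.projection q h v) := by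
  obtain ⟨x, hx, y, hy, rfl⟩ := Submodule.mem_sup.1 (h.sup_eq_top ▸ Submodule.mem_top : v ∈ p ⊔ q)
  simp only [map_add, Submodule.projection_apply_of_mem_left h hx,
    Submodule.projection_apply_of_mem_left h (hp x hx),
    Submodule.projection_apply_of_mem_right h hy,
    Submodule.projection_apply_of_mem_right h (hq y hy), add_zero]

theorem projection_notMem_bot {K : Type*} [Field K] [Algebra K F] [Module K V] [IsScalarTower K F V]
    {p q : Submodule F V} (h : IsCompl p q) (hbot : p ≠ ⊥) (htop : p ≠ ⊤) :
    p.projection q h ∉ (⊥ : Subalgebra K (End F V)) := by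
  intro hmem
  obtain ⟨c, hc⟩ := Algebra.mem_bot.1 hmem
  have hrange := Submodule.range_projection h
  rw [← hc, Algebra.algebraMap_eq_smul_one, ← algebraMap_smul F c] at hrange
  rcases eq_or_ne (algebraMap K F c) 0 with hc0 | hc0
  · rw [hc0, zero_smul, LinearMap.range_zero] at hrange
    exact hbot hrange.symm
  · rw [LinearMap.range_smul _ _ hc0, End.one_eq_id, LinearMap.range_id] at hrange
    exact htop hrange.symm

/-- The automorphism `e ↦ A⁻¹ e A` of `End F V`, whose fixed points are the endomorphisms of the
`D`-module `(V, A)`. -/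
def endPullback {φ : F ≃+* F} (A : V ≃ₛₗ[(φ : F →+* F)] V) :
    End F V →ₐ[fixedSubfield φ] End F V where
  __ := (A.symm.conjRingEquiv : End F V →+* End F V)
  commutes' c := by
    ext v
    apply A.injective
    have hc : φ c = c := c.2
    simp [Module.algebraMap_end_apply, Subfield.smul_def, map_smulₛₗ, hc]

theorem apply_endPullback {φ : F ≃+* F} (A : V ≃ₛₗ[(φ : F →+* F)] V) (e : End F V) (v : V) :
    A (endPullback A e v) = e (A v) := by
  simp [endPullback]

theorem endPullback_iterate_eq_self {φ : F ≃+* F} (A : V ≃ₛₗ[(φ : F →+* F)] V) {e : End F V} {n : ℕ}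
    (h : ∀ v, e (A^[n] v) = A^[n] (e v)) : (endPullback A)^[n] e = e := by
  have hiter (m : ℕ) (v : V) : A^[m] ((endPullback A)^[m] e v) = e (A^[m] v) := by
    induction m generalizing v with
    | zero => rfl
    | succ m ih =>
      rw [Function.iterate_succ_apply, Function.iterate_succ_apply', apply_endPullback, ih,
        Function.iterate_succ_apply]
  ext v
  exact A.injective.iterate n ((hiter n v).trans (h v))

theorem exists_map_subtype_eq_of_map_eq_self {φ : F ≃+* F} {P : F[X]}
    (hP : P.map (φ : F →+* F) = P) :
    ∃ Q : (fixedSubfield φ)[X], Q.map (fixedSubfield φ).subtype = P := by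
  rw [← mem_lifts, lifts_iff_coeff_lifts]
  intro n
  exact ⟨⟨P.coeff n, show φ _ = _ from by conv_rhs => rw [← hP, coeff_map, RingHom.coe_coe]⟩, rfl⟩

theorem mem_bot_of_endPullback_eq_self [FiniteDimensional F V] {φ : F ≃+* F}
    [IsAlgClosed (fixedSubfield φ)] (A : V ≃ₛₗ[(φ : F →+* F)] V)
    (hirr : ∀ p : Submodule F V, DiffStab A p → p = ⊥ ∨ p = ⊤) {e : End F V}
    (he : endPullback A e = e) : e ∈ (⊥ : Subalgebra (fixedSubfield φ) (End F V)) := by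
  rcases subsingleton_or_nontrivial V with _ | _
  · rw [Subsingleton.elim e 0]
    exact zero_mem _
  have he_integral : IsIntegral F e := Algebra.IsIntegral.isIntegral e
  have hmap : (minpoly F e).map (φ : F →+* F) = minpoly F e := by
    refine minpoly_map_eq_self _ (A.conjRingEquiv : End F V →+* End F V) ?_ he_integral ?_
    · ext f v
      simp [map_smulₛₗ]
    · ext v
      simpa [he] using apply_endPullback A e (A.symm v)
  obtain ⟨Q, hQ⟩ := exists_map_subtype_eq_of_map_eq_self hmap
  have hdeg : Q.degree ≠ 0 := by
    rw [← degree_map Q (fixedSubfield φ).subtype, hQ]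
    exact (minpoly.degree_pos he_integral).ne'
  obtain ⟨c, hc⟩ := IsAlgClosed.exists_root Q hdeg
  have hroot : (minpoly F e).IsRoot c := hQ ▸ hc.map (f := (fixedSubfield φ).subtype)
  have htop : End.eigenspace e (c : F) = ⊤ := by
    refine (hirr _ fun v hv => ?_).resolve_left (Module.End.hasEigenvalue_of_isRoot hroot)
    rw [End.mem_eigenspace_iff] at hv ⊢
    rw [← apply_endPullback A e v, he, hv, A.map_smulₛₗ]
    exact congrArg (· • A v) c.2
  refine Algebra.mem_bot.2 ⟨c, ?_⟩
  ext v
  exact (End.mem_eigenspace_iff.1 (htop ▸ Submodule.mem_top : v ∈ End.eigenspace e (c : F))).symm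

/-- The `D`-module `(V, A)` is induced from the `D_n`-module `E 0`: it is the direct sum of
subspaces `E k` that `A` permutes cyclically. -/
structure IsInduced (A : V → V) (n : ℕ) (E : ZMod n → Submodule F V) : Prop where
  isInternal : DirectSum.IsInternal E
  map_mem : ∀ k, ∀ v ∈ E k, A v ∈ E (k + 1)

namespace IsInduced

theorem diffStab_iterate {A : V → V} {n : ℕ} {E : ZMod n → Submodule F V} (h : IsInduced A n E)
    (k : ZMod n) : DiffStab A^[n] (E k) := by
  have hiter (m : ℕ) : ∀ v ∈ E k, A^[m] v ∈ E (k + m) := by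
    intro v hv
    induction m with
    | zero => simpa using hv
    | succ m ih =>
      rw [Function.iterate_succ_apply', Nat.cast_succ, ← add_assoc]
      exact h.map_mem _ _ ih
  simpa [DiffStab] using hiter n

variable [FiniteDimensional F V] {φ : F ≃+* F} {A : V ≃ₛₗ[(φ : F →+* F)] V} {n : ℕ} [NeZero n]
  {E : ZMod n → Submodule F V}

theorem finrank_le (h : IsInduced A n E) (j k : ZMod n) : finrank F (E j) ≤ finrank F (E k) := by
  have hstep (i : ZMod n) : finrank F (E i) ≤ finrank F (E (i + 1)) := by
    let Ai := ((A : V →ₛₗ[(φ : F →+* F)] V).domRestrict (E i)).codRestrict (E (i + 1))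
      fun v => h.map_mem i v v.2
    refine finrank_le_finrank_of_rank_le_rank ?_ (rank_lt_aleph0 F _)
    simpa using rank_le_of_injective_injective φ.symm Ai.toAddMonoidHom (by simp)
      (fun x y hxy => Subtype.ext (A.injective (congrArg Subtype.val hxy)))
      (fun c v => by simp [map_smulₛₗ])
  have hiter (m : ℕ) : finrank F (E j) ≤ finrank F (E (j + m)) := by
    induction m with
    | zero => rw [Nat.cast_zero, add_zero]
    | succ m ih =>
      rw [Nat.cast_succ, ← add_assoc]
      exact ih.trans (hstep _)
  have := hiter (k - j).val
  rwa [ZMod.natCast_zmod_val, add_sub_cancel] at this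

theorem finrank_eq (h : IsInduced A n E) (k : ZMod n) : finrank F V = n * finrank F (E k) := by
  have hsum := (LinearEquiv.ofBijective (DirectSum.coeLinearMap E) h.isInternal).finrank_eq
  rw [finrank_directSum, Finset.sum_congr rfl fun j _ =>
    (h.finrank_le j k).antisymm (h.finrank_le k j)] at hsum
  simpa [ZMod.card] using hsum.symm

theorem ne_bot [Nontrivial V] (h : IsInduced A n E) (k : ZMod n) : E k ≠ ⊥ := by
  intro hk
  have := h.finrank_eq k
  rw [hk, finrank_bot, mul_zero] at this
  exact finrank_pos.ne' this

theorem ne_top [Nontrivial V] (h : IsInduced A n E) (hn : n ≠ 1) (k : ZMod n) : E k ≠ ⊤ := by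
  intro hk
  have := h.finrank_eq k
  rw [hk, finrank_top, eq_comm, mul_eq_right₀ finrank_pos.ne'] at this
  exact hn this

end IsInduced

theorem isInduced_eigenspace {φ : F ≃+* F} (A : V ≃ₛₗ[(φ : F →+* F)] V) {n : ℕ} [NeZero n]
    {e : End F V} {a d : fixedSubfield φ} (he : endPullback A e = a • e + algebraMap _ _ d)
    {μ : ZMod n → fixedSubfield φ} (hμ : Function.Injective μ)
    (hμ_succ : ∀ k, μ (k + 1) = a * μ k + d)
    {P : (fixedSubfield φ)[X]} (hP : P.Monic) (hdeg : P.natDegree = n) (hroot : ∀ k, P.IsRoot (μ k))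
    (haeval : aeval e P = 0) : IsInduced A n fun k => End.eigenspace e (μ k : F) where
  isInternal := isInternal_eigenspace_of_aeval_eq_zero e (Subtype.val_injective.comp hμ)
    (hP.map (algebraMap _ F)) (by simp [hdeg]) (fun k => (hroot k).map)
    (by rw [aeval_map_algebraMap, haeval])
  map_mem k v hv := by
    have hfix : φ (μ (k + 1)) = μ (k + 1) := (μ (k + 1)).2
    rw [End.mem_eigenspace_iff] at hv ⊢
    have hσv : endPullback A e v = (μ (k + 1) : F) • v := by
      simp [he, hv, hμ_succ, add_smul, mul_smul, Subfield.smul_def]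
    rw [← apply_endPullback, hσv, map_smulₛₗ, RingHom.coe_coe, hfix]

theorem pow_ne_zero_of_endPullback_eq_smul {φ : F ≃+* F} (A : V ≃ₛₗ[(φ : F →+* F)] V)
    (hirr : ∀ p : Submodule F V, DiffStab A p → p = ⊥ ∨ p = ⊤) {z : fixedSubfield φ} {e : End F V}
    (he0 : e ≠ 0) (he : endPullback A e = z • e) (n : ℕ) : e ^ n ≠ 0 := by
  have hinj : Function.Injective e := by
    refine LinearMap.ker_eq_bot.1 ((hirr _ fun v hv => ?_).resolve_right
      fun h => he0 (LinearMap.ker_eq_top.1 h))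
    rw [LinearMap.mem_ker] at hv ⊢
    rw [← apply_endPullback, he, LinearMap.smul_apply, hv, smul_zero, map_zero]
  intro hn
  have hpow : Function.Injective (e ^ n : End F V) := by
    rw [End.coe_pow]
    exact hinj.iterate n
  exact he0 (LinearMap.ext fun v => hpow (by simp [hn]))

section Eigenspaces

variable [FiniteDimensional F V] {φ : F ≃+* F} [IsAlgClosed (fixedSubfield φ)]
  (A : V ≃ₛₗ[(φ : F →+* F)] V) (hirr : ∀ p : Submodule F V, DiffStab A p → p = ⊥ ∨ p = ⊤)
include hirr

theorem exists_isInduced_of_endPullback_eq_smul {p : ℕ} [NeZero p] {w : fixedSubfield φ}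
    (hw : IsPrimitiveRoot w p) {e : End F V} (he0 : e ≠ 0) (he : endPullback A e = w • e) :
    ∃ E : ZMod p → Submodule F V, IsInduced A p E := by
  obtain ⟨c, hc⟩ := Algebra.mem_bot.1 (mem_bot_of_endPullback_eq_self A hirr (e := e ^ p) (by
    rw [map_pow, he, _root_.smul_pow, hw.pow_eq_one, one_smul]))
  obtain ⟨b, hb⟩ := IsAlgClosed.exists_pow_nat_eq c (NeZero.pos p)
  have hb0 : b ≠ 0 := by
    rintro rfl
    exact pow_ne_zero_of_endPullback_eq_smul A hirr he0 he p
      (by rw [← hc, ← hb, zero_pow (NeZero.ne p), map_zero])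
  let χ := AddChar.zmodChar p hw.pow_eq_one
  refine ⟨_, isInduced_eigenspace A (a := w) (d := 0) (by simpa using he) (μ := fun k => χ k * b)
    ?_ ?_ (monic_X_pow_sub_C c (NeZero.ne p)) natDegree_X_pow_sub_C ?_ (by simp [hc])⟩
  · intro j k hjk
    have := mul_right_cancel₀ hb0 hjk
    rw [AddChar.zmodChar_apply, AddChar.zmodChar_apply] at this
    exact ZMod.val_injective p (hw.pow_inj (ZMod.val_lt j) (ZMod.val_lt k) this)
  · intro k
    have : χ 1 = w := by simpa using AddChar.zmodChar_apply' hw.pow_eq_one 1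
    simp only [AddChar.map_add_eq_mul, this]
    ring
  · intro k
    have : χ k ^ p = 1 := by rw [← AddChar.map_nsmul_eq_pow]; simp
    simp [mul_pow, this, hb]

theorem exists_isInduced_of_endPullback_eq_add_one [Nontrivial V] (p : ℕ) [Fact p.Prime]
    [CharP (fixedSubfield φ) p] {e : End F V} (he : endPullback A e = e + 1) :
    ∃ E : ZMod p → Submodule F V, IsInduced A p E := by
  have : CharP (End F V) p := charP_of_injective_algebraMap
    (algebraMap (fixedSubfield φ) _).injective p
  obtain ⟨c, hc⟩ := Algebra.mem_bot.1 (mem_bot_of_endPullback_eq_self A hirr (e := e ^ p - e) (by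
    rw [map_sub, map_pow, he, add_pow_char_of_commute _ (Commute.one_right e), one_pow,
      add_sub_add_right_eq_sub]))
  have hprime : p.Prime := Fact.out
  let P : (fixedSubfield φ)[X] := X ^ p - (X + C c)
  have hlt : (X + C c : (fixedSubfield φ)[X]).natDegree < p := by
    rw [natDegree_X_add_C]
    exact hprime.one_lt
  have hmonic : P.Monic := monic_X_pow_sub (degree_le_natDegree.trans_lt (mod_cast hlt))
  have hdeg : P.natDegree = p := by
    rw [natDegree_sub_eq_left_of_natDegree_lt (by rwa [natDegree_X_pow]), natDegree_X_pow]
  obtain ⟨b, hb⟩ := IsAlgClosed.exists_root P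
    (degree_ne_of_natDegree_ne (hdeg.trans_ne hprime.ne_zero))
  have hbp : b ^ p = b + c := by simpa [P, sub_eq_zero] using hb
  have hroot (k : ZMod p) : P.IsRoot (b + ZMod.castHom dvd_rfl _ k) := by
    rw [IsRoot.def, eval_sub, eval_add, eval_pow, eval_X, eval_C, add_pow_char, hbp, ← map_pow,
      ZMod.pow_card]
    ring
  refine ⟨_, isInduced_eigenspace A (a := 1) (d := 1) (by simpa using he)
    (fun j k h => RingHom.injective _ (add_left_cancel h)) (fun k => ?_) hmonic hdeg hroot ?_⟩
  · rw [map_add, map_one, one_mul, add_assoc]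
  · simp [P, hc, ← sub_sub]

theorem exists_prime_isInduced_of_endPullback_eq_smul {t : ℕ} (ht : t ≠ 0) {z : fixedSubfield φ}
    (hz : z ≠ 1) (hzt : z ^ t = 1) {e : End F V} (he0 : e ≠ 0) (he : endPullback A e = z • e) :
    ∃ p, p.Prime ∧ p ∣ t ∧ ∃ E : ZMod p → Submodule F V, IsInduced A p E := by
  have hp : (orderOf z).minFac.Prime := Nat.minFac_prime (by rwa [Ne, orderOf_eq_one_iff])
  have : NeZero (orderOf z).minFac := ⟨hp.ne_zero⟩
  obtain ⟨m, hm⟩ := (orderOf z).minFac_dvd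
  have hw : IsPrimitiveRoot (z ^ m) (orderOf z).minFac :=
    (IsPrimitiveRoot.orderOf z).pow
      (orderOf_pos_iff.2 (isOfFinOrder_iff_pow_eq_one.2 ⟨t, ht.bot_lt, hzt⟩))
      (by rw [mul_comm, ← hm])
  refine ⟨_, hp, (Nat.minFac_dvd _).trans (orderOf_dvd_of_pow_eq_one hzt),
    exists_isInduced_of_endPullback_eq_smul A hirr hw
      (pow_ne_zero_of_endPullback_eq_smul A hirr he0 he m) ?_⟩
  rw [map_pow, he, _root_.smul_pow]

theorem exists_prime_isInduced {t : ℕ} (ht : t ≠ 0) {p₀ : Submodule F V}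
    (hp₀ : DiffStab A^[t] p₀) (hbot : p₀ ≠ ⊥) (htop : p₀ ≠ ⊤) :
    ∃ p, p.Prime ∧ p ∣ t ∧ ∃ E : ZMod p → Submodule F V, IsInduced A p E := by
  let T : AddMonoid.End V := (A : V →ₛₗ[(φ : F →+* F)] V).toAddMonoidHom
  obtain ⟨B, hB⟩ : ∃ B : V →+ V, ⇑B = A^[t] :=
    ⟨(T ^ t : AddMonoid.End V), AddMonoid.End.coe_pow V T t⟩
  rw [← hB] at hp₀
  obtain ⟨q, hq, hcompl⟩ := exists_isCompl_diffStab A hirr B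
    (fun v => hB ▸ (Function.Commute.self_iterate A t v)) hp₀
  have hσ : (endPullback A)^[t] (p₀.projection q hcompl) = p₀.projection q hcompl :=
    endPullback_iterate_eq_self A fun v => by
      rw [← hB]
      exact projection_comm_of_diffStab hcompl hp₀ hq v
  have : Nontrivial V := (Submodule.nontrivial_iff F).1 ⟨p₀, ⊥, hbot⟩
  rcases exists_map_eq_smul_or_add_one (endPullback A)
    (fun _ => mem_bot_of_endPullback_eq_self A hirr) ht (projection_notMem_bot hcompl hbot htop) hσ
    with ⟨z, hz, hzt, e, he0, he⟩ | ⟨ht0, e, he⟩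
  · exact exists_prime_isInduced_of_endPullback_eq_smul A hirr ht hz hzt he0 he
  · obtain ⟨p, hp⟩ := CharP.exists (fixedSubfield φ)
    have hpt : p ∣ t := (CharP.cast_eq_zero_iff _ p t).1 ht0
    have : Fact p.Prime := ⟨(CharP.char_is_prime_or_zero (fixedSubfield φ) p).resolve_right
      fun h => ht (zero_dvd_iff.1 (h ▸ hpt))⟩
    exact ⟨p, Fact.out, hpt, exists_isInduced_of_endPullback_eq_add_one A hirr p he⟩

end Eigenspaces

theorem reducible_restriction_at_a_prime_general [FiniteDimensional F V] (φ : F ≃+* F)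
    [IsAlgClosed (fixedSubfield φ)] (A : V ≃+ V) (hA : ∀ (f : F) (v : V), A (f • v) = φ f • A v)
    (hirr : ∀ p : Submodule F V, DiffStab A p → p = ⊥ ∨ p = ⊤) {t : ℕ} (ht : t ≠ 0)
    {p₀ : Submodule F V} (hp₀ : DiffStab A^[t] p₀) (hbot : p₀ ≠ ⊥) (htop : p₀ ≠ ⊤) :
    ∃ p : ℕ, p.Prime ∧ p ∣ t.gcd (finrank F V) ∧
      ∃ q : Submodule F V, DiffStab A^[p] q ∧ q ≠ ⊥ ∧ q ≠ ⊤ := by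
  let A' : V ≃ₛₗ[(φ : F →+* F)] V := { A with map_smul' := hA }
  obtain ⟨p, hp, hpt, E, hE⟩ := exists_prime_isInduced A' hirr ht hp₀ hbot htop
  have : NeZero p := ⟨hp.ne_zero⟩
  have : Nontrivial V := (Submodule.nontrivial_iff F).1 ⟨p₀, ⊥, hbot⟩
  exact ⟨p, hp, Nat.dvd_gcd hpt ⟨_, hE.finrank_eq 0⟩, E 0, hE.diffStab_iterate 0, hE.ne_bot 0,
    hE.ne_top hp.ne_one 0⟩

end DifferenceModule

end

/-- Let the fixed field `C` of `φ` be algebraically closed of characteristic 0.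
If `M = (V, A)` is an irreducible finite-dimensional `D`-module whose restriction
to `D_t` (i.e. `(V, A^t)`) is reducible for some `t ≥ 1`, then the restriction of
`M` to `D_p` is reducible for some prime `p` dividing `gcd(t, dim_F M)`. -/
theorem reducible_restriction_at_a_prime
    {F V : Type*} [Field F] [CharZero F]
    (φ : F ≃+* F) [IsAlgClosed (fixedSubfield φ)]
    [AddCommGroup V] [Module F V] [FiniteDimensional F V]
    (A : V ≃+ V) (hA : ∀ (f : F) (v : V), A (f • v) = φ f • A v)
    (hnt : Nontrivial V)
    (hirr : ∀ p : Submodule F V, DiffStab ⇑A p → p = ⊥ ∨ p = ⊤)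
    (t : ℕ) (ht : 1 ≤ t)
    (p₀ : Submodule F V) (hp₀ : DiffStab ((⇑A)^[t]) p₀)
    (hp₀bot : p₀ ≠ ⊥) (hp₀top : p₀ ≠ ⊤) :
    ∃ p : ℕ, p.Prime ∧ p ∣ Nat.gcd t (Module.finrank F V) ∧
      ∃ q : Submodule F V, DiffStab ((⇑A)^[p]) q ∧ q ≠ ⊥ ∧ q ≠ ⊤ := by
  exact reducible_restriction_at_a_prime_general φ A hA hirr (by lia) hp₀ hp₀bot hp₀top
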